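/- Let d ≥ 1, ρ > 0, σ > 0. Let U : ℝ^d → ℝ be twice continuously differentiable and ℤ^d-periodic, set b = ∇U and m = exp(2U/σ²). Let r : ℝ^d → ℝ be continuous and ℤ^d-periodic, and let V : ℝ^d → ℝ be twice continuously differentiable, ℤ^d-periodic, and satisfy ℒV = r on ℝ^d, i.e. ρ·V − (σ²/2)·ΔV − ∇U·∇V = r. Let φ = (φ₁, …, φ_n) : ℝ^d → ℝⁿ be twice continuously differentiable and ℤ^d-periodic with linearly independent components, and set v(x,θ) = θ·φ(x) for θ ∈ ℝⁿ. Then the n×n matrix H with entries H_{ij} = ∫_Q φ_i·ℒφ_j·m dx is invertible, and θ* := H⁻¹·(∫_Q r(x)·φ(x)·m(x) dx) is the unique minimizer over θ ∈ ℝⁿ of the functional J(θ) = ∫_Q [ ρ·(v(x,θ) − V(x))² + (σ²/2)·|∇_x v(x,θ) − ∇V(x)|² ]·m(x) dx. -/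

import Mathlib

open MeasureTheory Matrix
open scoped RealInnerProductSpace

noncomputable section

/-- `ℤ^d`-periodicity of a function on `ℝ^d`. -/
def ZdPeriodic {d : ℕ} {α : Type*} (f : EuclideanSpace ℝ (Fin d) → α) : Prop :=
  ∀ x : EuclideanSpace ℝ (Fin d), ∀ n : Fin d → ℤ,
    f (x + (WithLp.equiv 2 (Fin d → ℝ)).symm fun i => (n i : ℝ)) = f x

/-- The unit cube `Q = [0,1)^d`. -/
def unitCube (d : ℕ) : Set (EuclideanSpace ℝ (Fin d)) :=
  {x | ∀ i, x i ∈ Set.Ico (0 : ℝ) 1}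

/-- The Laplacian of `f` at `x`: the sum of the diagonal second derivatives. -/
def lapl {d : ℕ} (f : EuclideanSpace ℝ (Fin d) → ℝ) (x : EuclideanSpace ℝ (Fin d)) : ℝ :=
  ∑ i, iteratedFDeriv ℝ 2 f x ![EuclideanSpace.single i 1, EuclideanSpace.single i 1]

/-- The generator with gradient drift `∇U`:
`ℒw(x) = ρ w(x) - (σ²/2) Δw(x) - ∇U(x)·∇w(x)`. -/
def genU {d : ℕ} (ρ σ : ℝ) (U : EuclideanSpace ℝ (Fin d) → ℝ)
    (w : EuclideanSpace ℝ (Fin d) → ℝ) (x : EuclideanSpace ℝ (Fin d)) : ℝ :=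
  ρ * w x - σ ^ 2 / 2 * lapl w x - ⟪gradient U x, gradient w x⟫

abbrev EE (d : ℕ) := EuclideanSpace ℝ (Fin d)

lemma unitCube_eq (d : ℕ) : unitCube d =
    (@WithLp.ofLp 2 (Fin d → ℝ)) ⁻¹' (Set.univ.pi fun _ => Set.Ico (0:ℝ) 1) := by
  ext x; simp [unitCube]

lemma ofLp_emb (d : ℕ) : MeasurableEmbedding (@WithLp.ofLp 2 (Fin d → ℝ)) :=
  (EuclideanSpace.equiv (Fin d) ℝ).toHomeomorph.measurableEmbedding

lemma integral_cube (d : ℕ) (g : EE d → ℝ) :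
    ∫ x in unitCube d, g x = ∫ y in Set.Icc (0 : Fin d → ℝ) 1, g (WithLp.toLp 2 y) := by
  have h := (PiLp.volume_preserving_ofLp (Fin d)).setIntegral_preimage_emb (ofLp_emb d)
    (fun y => g (WithLp.toLp 2 y)) (Set.univ.pi fun _ => Set.Ico (0:ℝ) 1)
  rw [unitCube_eq]
  simp only [WithLp.toLp_ofLp] at h
  rw [h, volume_pi]
  exact setIntegral_congr_set (Measure.univ_pi_Ico_ae_eq_Icc (f := (0 : Fin d → ℝ)) (g := 1))

lemma intOn_cube (d : ℕ) {g : EE d → ℝ} (hg : Continuous g) :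
    IntegrableOn g (unitCube d) := by
  have hK : IsCompact ((EuclideanSpace.equiv (Fin d) ℝ).toHomeomorph ⁻¹'
      (Set.Icc (0 : Fin d → ℝ) 1)) :=
    ((EuclideanSpace.equiv (Fin d) ℝ).toHomeomorph.isCompact_preimage).2 isCompact_Icc
  refine (hg.continuousOn.integrableOn_compact hK).mono_set ?_
  intro x hx
  exact ⟨fun i => (hx i).1, fun i => (hx i).2.le⟩

/-- Integral of the divergence of a periodic field vanishes. -/
lemma integral_div_periodic (k : ℕ) (G : Fin (k+1) → EE (k+1) → ℝ)
    (hG : ∀ i, ContDiff ℝ 1 (G i)) (hper : ∀ i, ZdPeriodic (G i)) :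
    ∫ x in unitCube (k+1), ∑ i, fderiv ℝ (G i) x (EuclideanSpace.single i 1) = 0 := by
  rw [integral_cube]
  let L : (Fin (k+1) → ℝ) →L[ℝ] EE (k+1) := (EuclideanSpace.equiv (Fin (k+1)) ℝ).symm
  have hL : ∀ y, L y = WithLp.toLp 2 y := fun y => rfl
  have hLe : ∀ i, L (Pi.single i 1) = EuclideanSpace.single i 1 := fun i => rfl
  have hc : ∀ i, Continuous (fun x => fderiv ℝ (G i) x) := fun i =>
    (hG i).continuous_fderiv (by norm_num)
  have key := integral_divergence_of_hasFDerivAt_off_countable' (0 : Fin (k+1) → ℝ) 1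
    zero_le_one (fun i y => G i (L y)) (fun i y => (fderiv ℝ (G i) (L y)).comp L) ∅
    Set.countable_empty (fun i => ((hG i).continuous.comp L.continuous).continuousOn)
    (fun x _ i => (((hG i).differentiable (by norm_num)) (L x)).hasFDerivAt.comp x L.hasFDerivAt)
    (by
      apply Continuous.integrableOn_Icc
      refine continuous_finsetSum _ fun i _ => ?_
      exact ((hc i).comp L.continuous).clm_apply continuous_const)
  simp only [ContinuousLinearMap.comp_apply, hLe] at key
  simp only [hL] at key
  rw [key]
  refine Finset.sum_eq_zero fun i _ => ?_
  rw [sub_eq_zero]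
  congr 1
  ext y
  rw [← hper i (WithLp.toLp 2 (i.insertNth ((0 : Fin (k+1) → ℝ) i) y)) (Pi.single i 1)]
  congr 1
  ext j
  refine Fin.succAboveCases i ?_ (fun l => ?_) j
  · simp
  · simp

lemma zero_of_integral_zero (d : ℕ) {g : EE d → ℝ} (hg : Continuous g) (h0 : ∀ x, 0 ≤ g x)
    (hper : ZdPeriodic g) (hintg : ∫ x in unitCube d, g x = 0) : ∀ x, g x = 0 := by
  rw [integral_cube] at hintg
  have hc : Continuous (fun y : Fin d → ℝ => g (WithLp.toLp 2 y)) :=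
    hg.comp (EuclideanSpace.equiv (Fin d) ℝ).symm.continuous
  rw [setIntegral_eq_zero_iff_of_nonneg_ae (Filter.Eventually.of_forall fun y => h0 _)
    hc.integrableOn_Icc] at hintg
  have hcl : closure (Set.univ.pi fun _ : Fin d => Set.Ioo (0:ℝ) 1) = Set.Icc 0 1 := by
    rw [closure_pi_set, ← Set.pi_univ_Icc]
    simp
  have hsub : (Set.univ.pi fun _ : Fin d => Set.Ioo (0:ℝ) 1) ⊆ Set.Icc 0 1 := by
    rw [← hcl]; exact subset_closure
  have hEq : Set.EqOn (fun y : Fin d → ℝ => g (WithLp.toLp 2 y)) 0 (Set.Icc 0 1) := by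
    refine Measure.eqOn_of_ae_eq (μ := volume) hintg hc.continuousOn continuousOn_const ?_
    rw [← hcl]
    apply closure_mono
    rw [hcl]
    exact interior_maximal hsub (isOpen_set_pi Set.finite_univ fun _ _ => isOpen_Ioo)
  intro x
  have h1 := hper (WithLp.toLp 2 fun i => Int.fract (x i)) (fun i => ⌊x i⌋)
  have h2 : (WithLp.toLp 2 fun i => Int.fract (x i)) +
      (WithLp.equiv 2 (Fin d → ℝ)).symm (fun i => ((⌊x i⌋ : ℤ) : ℝ)) = x := by
    ext i; simp [Int.fract_add_floor]
  rw [h2] at h1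
  rw [h1]
  exact hEq ⟨fun i => Int.fract_nonneg _, fun i => (Int.fract_lt_one _).le⟩

lemma inner_grad {d : ℕ} (f g : EE d → ℝ) (x : EE d) :
    ⟪gradient f x, gradient g x⟫ =
      ∑ i, fderiv ℝ f x (EuclideanSpace.single i 1) * fderiv ℝ g x (EuclideanSpace.single i 1) := by
  rw [← (EuclideanSpace.basisFun (Fin d) ℝ).sum_inner_mul_inner]
  refine Finset.sum_congr rfl fun i _ => ?_
  rw [inner_gradient_left, inner_gradient_right]
  simp

lemma lapl_eq {d : ℕ} (f : EE d → ℝ) (x : EE d) :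
    lapl f x = ∑ i, fderiv ℝ (fderiv ℝ f) x (EuclideanSpace.single i 1)
      (EuclideanSpace.single i 1) := by
  simp [lapl, iteratedFDeriv_two_apply]

lemma ZdPeriodic.fderiv {d : ℕ} {f : EE d → ℝ} (hf : ZdPeriodic f) :
    ZdPeriodic (fderiv ℝ f) := by
  intro x n
  rw [← fderiv_comp_add_right]
  congr 1
  ext y
  exact hf y n

lemma cont_grad {d : ℕ} {f : EE d → ℝ} (hf : ContDiff ℝ 2 f) : Continuous (gradient f) :=
  (InnerProductSpace.toDual ℝ (EE d)).symm.continuous.comp (hf.continuous_fderiv (by norm_num))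

/-- The bilinear form. -/
def BB {d : ℕ} (ρ σ : ℝ) (m f g : EE d → ℝ) : ℝ :=
  ∫ x in unitCube d, (ρ * (f x * g x) + σ ^ 2 / 2 * ⟪gradient f x, gradient g x⟫) * m x

lemma BB_comm {d : ℕ} (ρ σ : ℝ) (m f g : EE d → ℝ) : BB ρ σ m f g = BB ρ σ m g f := by
  simp only [BB, real_inner_comm, mul_comm]

lemma BB_int {d : ℕ} (ρ σ : ℝ) {m f g : EE d → ℝ} (hm : Continuous m)
    (hf : ContDiff ℝ 2 f) (hg : ContDiff ℝ 2 g) :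
    IntegrableOn (fun x => (ρ * (f x * g x) + σ ^ 2 / 2 * ⟪gradient f x, gradient g x⟫) * m x)
      (unitCube d) := by
  apply intOn_cube
  have := hf.continuous
  have := hg.continuous
  have := cont_grad hf
  have := cont_grad hg
  fun_prop

lemma grad_add {d : ℕ} {f g : EE d → ℝ} (hf : ContDiff ℝ 2 f) (hg : ContDiff ℝ 2 g) (x : EE d) :
    gradient (fun y => f y + g y) x = gradient f x + gradient g x := by
  simp only [gradient]
  rw [fderiv_fun_add (hf.differentiable (by norm_num) x) (hg.differentiable (by norm_num) x)]
  simp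

lemma grad_sub {d : ℕ} {f g : EE d → ℝ} (hf : ContDiff ℝ 2 f) (hg : ContDiff ℝ 2 g) (x : EE d) :
    gradient (fun y => f y - g y) x = gradient f x - gradient g x := by
  simp only [gradient]
  rw [fderiv_fun_sub (hf.differentiable (by norm_num) x) (hg.differentiable (by norm_num) x)]
  simp

lemma grad_sum {d n : ℕ} {f : Fin n → EE d → ℝ} (hf : ∀ i, ContDiff ℝ 2 (f i)) (c : Fin n → ℝ)
    (x : EE d) :
    gradient (fun y => ∑ i, c i * f i y) x = ∑ i, c i • gradient (f i) x := by
  simp only [gradient]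
  rw [fderiv_fun_sum (fun i _ => ((hf i).differentiable (by norm_num) x).const_mul (c i))]
  rw [map_sum]
  refine Finset.sum_congr rfl fun i _ => ?_
  rw [fderiv_const_mul ((hf i).differentiable (by norm_num) x)]
  simp

lemma BB_add {d : ℕ} (ρ σ : ℝ) {m f g h : EE d → ℝ} (hm : Continuous m)
    (hf : ContDiff ℝ 2 f) (hg : ContDiff ℝ 2 g) (hh : ContDiff ℝ 2 h) :
    BB ρ σ m (fun y => f y + g y) h = BB ρ σ m f h + BB ρ σ m g h := by
  unfold BB
  rw [← integral_add (BB_int ρ σ hm hf hh) (BB_int ρ σ hm hg hh)]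
  congr 1
  ext x
  rw [grad_add hf hg, inner_add_left]
  ring

lemma BB_sub {d : ℕ} (ρ σ : ℝ) {m f g h : EE d → ℝ} (hm : Continuous m)
    (hf : ContDiff ℝ 2 f) (hg : ContDiff ℝ 2 g) (hh : ContDiff ℝ 2 h) :
    BB ρ σ m (fun y => f y - g y) h = BB ρ σ m f h - BB ρ σ m g h := by
  unfold BB
  rw [← integral_sub (BB_int ρ σ hm hf hh) (BB_int ρ σ hm hg hh)]
  congr 1
  ext x
  rw [grad_sub hf hg, inner_sub_left]
  ring

lemma BB_sum {d n : ℕ} (ρ σ : ℝ) {m h : EE d → ℝ} {f : Fin n → EE d → ℝ} (hm : Continuous m)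
    (hf : ∀ i, ContDiff ℝ 2 (f i)) (hh : ContDiff ℝ 2 h) (c : Fin n → ℝ) :
    BB ρ σ m (fun y => ∑ i, c i * f i y) h = ∑ i, c i * BB ρ σ m (f i) h := by
  unfold BB
  simp_rw [← integral_const_mul]
  rw [← integral_finsetSum _ (fun i _ => (BB_int ρ σ hm (hf i) hh).const_mul (c i))]
  congr 1
  ext x
  rw [grad_sum hf, sum_inner, Finset.sum_mul, Finset.mul_sum, Finset.mul_sum,
    ← Finset.sum_add_distrib, Finset.sum_mul]
  refine Finset.sum_congr rfl fun i _ => ?_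
  rw [real_inner_smul_left]
  ring

lemma BB_self_nonneg {d : ℕ} {ρ σ : ℝ} (hρ : 0 < ρ) {m f : EE d → ℝ} (hm0 : ∀ x, 0 < m x) :
    0 ≤ BB ρ σ m f f := by
  refine integral_nonneg fun x => ?_
  have := (hm0 x).le
  have h2 : (0:ℝ) ≤ ⟪gradient f x, gradient f x⟫ := real_inner_self_nonneg
  have h3 := mul_self_nonneg (f x)
  simp only [Pi.zero_apply]
  positivity

lemma BB_self_zero {d : ℕ} {ρ σ : ℝ} (hρ : 0 < ρ) {m f : EE d → ℝ} (hm : Continuous m)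
    (hm0 : ∀ x, 0 < m x) (hmper : ZdPeriodic m) (hf : ContDiff ℝ 2 f) (hfper : ZdPeriodic f)
    (h : BB ρ σ m f f = 0) : ∀ x, f x = 0 := by
  have hc := hf.continuous
  have hz : ∫ x in unitCube d, f x * f x * m x = 0 := by
    have h1 : ∫ x in unitCube d, ρ * (f x * f x * m x) ≤ BB ρ σ m f f := by
      unfold BB
      refine integral_mono (intOn_cube d (by fun_prop)) (BB_int ρ σ hm hf hf) fun x => ?_
      have := (hm0 x).le
      have h2 : (0:ℝ) ≤ ⟪gradient f x, gradient f x⟫ := real_inner_self_nonneg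
      have : 0 ≤ σ ^ 2 / 2 * ⟪gradient f x, gradient f x⟫ * m x := by positivity
      simp only
      linarith
    rw [h, integral_const_mul] at h1
    have h3 : 0 ≤ ∫ x in unitCube d, f x * f x * m x :=
      integral_nonneg fun x => mul_nonneg (mul_self_nonneg _) (hm0 x).le
    nlinarith
  have := zero_of_integral_zero d (g := fun x => f x * f x * m x) (by fun_prop)
    (fun x => mul_nonneg (mul_self_nonneg _) (hm0 x).le)
    (fun x n => by simp only [hfper x n, hmper x n]) hz
  intro x
  have := this x
  simpa [(hm0 x).ne'] using this

lemma ibp {d : ℕ} (hd : 1 ≤ d) {ρ σ : ℝ} (hσ : 0 < σ) {U f w : EE d → ℝ}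
    (hU : ContDiff ℝ 2 U) (hUper : ZdPeriodic U)
    (hf : ContDiff ℝ 2 f) (hfper : ZdPeriodic f)
    (hw : ContDiff ℝ 2 w) (hwper : ZdPeriodic w) :
    ∫ x in unitCube d, f x * genU ρ σ U w x * Real.exp (2 * U x / σ ^ 2) =
      BB ρ σ (fun x => Real.exp (2 * U x / σ ^ 2)) f w := by
  obtain ⟨k, rfl⟩ : ∃ k, d = k + 1 := ⟨d - 1, by omega⟩
  set m : EE (k+1) → ℝ := fun x => Real.exp (2 * U x / σ ^ 2) with hm
  have hmC : ContDiff ℝ 2 m := by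
    rw [hm]; fun_prop
  have hmper : ZdPeriodic m := fun x n => by simp only [hm, hUper x n]
  let G : Fin (k+1) → EE (k+1) → ℝ := fun i x =>
    f x * m x * fderiv ℝ w x (EuclideanSpace.single i 1)
  have hw1 : ContDiff ℝ 1 (fderiv ℝ w) := hw.fderiv_right (by norm_num)
  have hf1 : ContDiff ℝ 1 f := hf.of_le (by norm_num)
  have hm1 : ContDiff ℝ 1 m := hmC.of_le (by norm_num)
  have hG : ∀ i, ContDiff ℝ 1 (G i) := fun i => by
    exact (hf1.mul hm1).mul (hw1.clm_apply contDiff_const)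
  have hGper : ∀ i, ZdPeriodic (G i) := fun i x n => by
    simp only [G, hfper x n, hmper x n, hwper.fderiv x n]
  have hdm : ∀ x v, fderiv ℝ m x v = 2 / σ ^ 2 * fderiv ℝ U x v * m x := by
    intro x v
    have h1 : HasFDerivAt m (m x • ((2 / σ ^ 2) • fderiv ℝ U x)) x := by
      have h2 := (((hU.differentiable (by norm_num) x).hasFDerivAt).const_mul (2 / σ ^ 2)).exp
      have h3 : m = fun x => Real.exp (2 / σ ^ 2 * U x) := by
        rw [hm]; ext y; congr 1; ring
      rw [h3]
      exact h2
    rw [h1.fderiv]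
    simp
    ring
  have hdG : ∀ i x, fderiv ℝ (G i) x (EuclideanSpace.single i 1) =
      (fderiv ℝ f x (EuclideanSpace.single i 1) * fderiv ℝ w x (EuclideanSpace.single i 1)
      + f x * (2 / σ ^ 2) * (fderiv ℝ U x (EuclideanSpace.single i 1) *
        fderiv ℝ w x (EuclideanSpace.single i 1))
      + f x * fderiv ℝ (fderiv ℝ w) x (EuclideanSpace.single i 1)
          (EuclideanSpace.single i 1)) * m x := by
    intro i x
    have hfd := (hf1.differentiable (by norm_num) x).hasFDerivAt
    have hmd := (hm1.differentiable (by norm_num) x).hasFDerivAt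
    have hwd := ((hw1.differentiable (by norm_num) x).hasFDerivAt).clm_apply
      (hasFDerivAt_const (EuclideanSpace.single i (1:ℝ)) x)
    have := (hfd.mul hmd).mul hwd
    have e : fderiv ℝ (G i) x = _ := this.fderiv
    rw [e]
    simp [hdm]
    ring
  have hdiv := integral_div_periodic k G hG hGper
  have hintg : IntegrableOn (fun x => ∑ i, fderiv ℝ (G i) x (EuclideanSpace.single i 1))
      (unitCube (k+1)) := by
    apply intOn_cube
    refine continuous_finsetSum _ fun i _ => ?_
    exact ((hG i).continuous_fderiv (by norm_num)).clm_apply continuous_const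
  have hpt : ∀ x, f x * genU ρ σ U w x * m x =
      (ρ * (f x * w x) + σ ^ 2 / 2 * ⟪gradient f x, gradient w x⟫) * m x
      - σ ^ 2 / 2 * ∑ i, fderiv ℝ (G i) x (EuclideanSpace.single i 1) := by
    intro x
    simp only [hdG]
    rw [← Finset.sum_mul, Finset.sum_add_distrib, Finset.sum_add_distrib, ← Finset.mul_sum,
      ← Finset.mul_sum, ← lapl_eq, ← inner_grad, ← inner_grad, genU]
    field_simp
    ring
  calc _ = ∫ x in unitCube (k+1),
      ((ρ * (f x * w x) + σ ^ 2 / 2 * ⟪gradient f x, gradient w x⟫) * m x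
      - σ ^ 2 / 2 * ∑ i, fderiv ℝ (G i) x (EuclideanSpace.single i 1)) := by
        congr 1; ext x; exact hpt x
    _ = _ := by
      rw [integral_sub (BB_int ρ σ hmC.continuous hf hw) (hintg.const_mul _),
        integral_const_mul, hdiv]
      simp [BB]

/-- In the Langevin setting (`b = ∇U`, `m = e^{2U/σ²}`, `ℒV = r`), the feature matrix
`H_{ij} = ∫_Q φ_i ℒφ_j m` is invertible and
`θ* = H⁻¹ ∫_Q r φ m` is the unique minimizer of
`J(θ) = ∫_Q [ρ (v(·,θ) − V)² + (σ²/2) |∇v(·,θ) − ∇V|²] m`. -/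
theorem tdzero_limit_is_minimizer
    (d n : ℕ) (hd : 1 ≤ d) (ρ σ : ℝ) (hρ : 0 < ρ) (hσ : 0 < σ)
    (U : EuclideanSpace ℝ (Fin d) → ℝ) (hU : ContDiff ℝ 2 U) (hUper : ZdPeriodic U)
    (m : EuclideanSpace ℝ (Fin d) → ℝ)
    (hm : m = fun x => Real.exp (2 * U x / σ ^ 2))
    (r : EuclideanSpace ℝ (Fin d) → ℝ) (hr : Continuous r) (hrper : ZdPeriodic r)
    (V : EuclideanSpace ℝ (Fin d) → ℝ) (hV : ContDiff ℝ 2 V) (hVper : ZdPeriodic V)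
    (hPDE : ∀ x, genU ρ σ U V x = r x)
    (φ : Fin n → EuclideanSpace ℝ (Fin d) → ℝ)
    (hφ : ∀ i, ContDiff ℝ 2 (φ i)) (hφper : ∀ i, ZdPeriodic (φ i))
    (hφli : LinearIndependent ℝ φ)
    (H : Matrix (Fin n) (Fin n) ℝ)
    (hH : ∀ i j, H i j = ∫ x in unitCube d, φ i x * genU ρ σ U (φ j) x * m x)
    (J : (Fin n → ℝ) → ℝ)
    (hJ : ∀ θ, J θ =
      ∫ x in unitCube d,
        (ρ * ((∑ i, θ i * φ i x) - V x) ^ 2 +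
          σ ^ 2 / 2 * ‖gradient (fun y => ∑ i, θ i * φ i y) x - gradient V x‖ ^ 2) * m x)
    (θstar : Fin n → ℝ)
    (hθstar : θstar = H⁻¹.mulVec fun i => ∫ x in unitCube d, r x * φ i x * m x) :
    IsUnit H ∧ (∀ θ, J θstar ≤ J θ) ∧ ∀ θ, J θ = J θstar → θ = θstar := by
  have hmc : Continuous m := by
    have := hU.continuous
    rw [hm]; fun_prop
  have hm0 : ∀ x, 0 < m x := fun x => by rw [hm]; exact Real.exp_pos _
  have hmper : ZdPeriodic m := fun x k => by simp only [hm, hUper x k]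
  have hHB : ∀ i j, H i j = BB ρ σ m (φ i) (φ j) := fun i j => by
    rw [hH, hm]
    exact ibp hd hσ hU hUper (hφ i) (hφper i) (hφ j) (hφper j)
  have hbB : ∀ i, (∫ x in unitCube d, r x * φ i x * m x) = BB ρ σ m (φ i) V := fun i => by
    rw [hm, ← ibp hd hσ hU hUper (hφ i) (hφper i) hV hVper]
    congr 1
    ext x
    rw [hPDE]
    ring
  have hvC : ∀ θ : Fin n → ℝ, ContDiff ℝ 2 (fun y => ∑ i, θ i * φ i y) := fun θ =>
    ContDiff.sum fun i _ => contDiff_const.mul (hφ i)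
  have hvper : ∀ θ : Fin n → ℝ, ZdPeriodic (fun y => ∑ i, θ i * φ i y) := fun θ x k => by
    simp only [hφper _ x k]
  have hHv : ∀ θ i, (H.mulVec θ) i = BB ρ σ m (φ i) (fun y => ∑ i, θ i * φ i y) := by
    intro θ i
    rw [BB_comm, BB_sum ρ σ hmc hφ (hφ i)]
    simp only [Matrix.mulVec, dotProduct, hHB]
    refine Finset.sum_congr rfl fun j _ => ?_
    rw [BB_comm, mul_comm]
  have hzero : ∀ θ : Fin n → ℝ, BB ρ σ m (fun y => ∑ i, θ i * φ i y)
      (fun y => ∑ i, θ i * φ i y) = 0 → θ = 0 := by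
    intro θ h
    have h1 := BB_self_zero hρ hmc hm0 hmper (hvC θ) (hvper θ) h
    have h2 := Fintype.linearIndependent_iff.1 hφli θ (by
      ext x
      simpa using h1 x)
    exact funext h2
  have hunit : IsUnit H := by
    rw [← Matrix.mulVec_injective_iff_isUnit]
    intro a b hab
    have h0 : H.mulVec (a - b) = 0 := by
      rw [Matrix.mulVec_sub]; exact sub_eq_zero.2 hab
    refine sub_eq_zero.1 (hzero (a - b) ?_)
    rw [BB_sum ρ σ hmc hφ (hvC _)]
    refine Finset.sum_eq_zero fun i _ => ?_
    rw [← hHv, h0]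
    simp
  have hHθ : ∀ i, (H.mulVec θstar) i = BB ρ σ m (φ i) V := by
    intro i
    rw [hθstar, Matrix.mulVec_mulVec, Matrix.mul_nonsing_inv _
      ((Matrix.isUnit_iff_isUnit_det _).1 hunit), Matrix.one_mulVec]
    exact hbB i
  have hJB : ∀ θ, J θ = BB ρ σ m (fun x => (∑ i, θ i * φ i x) - V x)
      (fun x => (∑ i, θ i * φ i x) - V x) := by
    intro θ
    rw [hJ, BB]
    congr 1
    ext x
    rw [grad_sub (hvC θ) hV, real_inner_self_eq_norm_sq]
    ring
  have hexp : ∀ θ, J θ = J θstar + BB ρ σ m (fun y => ∑ i, (θ - θstar) i * φ i y)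
      (fun y => ∑ i, (θ - θstar) i * φ i y) := by
    intro θ
    have he : ContDiff ℝ 2 (fun x => (∑ i, θstar i * φ i x) - V x) := (hvC θstar).sub hV
    have hδ := hvC (θ - θstar)
    have hsplit : (fun x => (∑ i, θ i * φ i x) - V x) =
        fun x => ((fun x => (∑ i, θstar i * φ i x) - V x) x) +
          ((fun y => ∑ i, (θ - θstar) i * φ i y) x) := by
      ext x
      simp only [Pi.sub_apply, sub_mul, Finset.sum_sub_distrib]
      ring
    have horth : BB ρ σ m (fun y => ∑ i, (θ - θstar) i * φ i y)
        (fun x => (∑ i, θstar i * φ i x) - V x) = 0 := by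
      rw [BB_sum ρ σ hmc hφ he]
      refine Finset.sum_eq_zero fun i _ => ?_
      rw [BB_comm, BB_sub ρ σ hmc (hvC θstar) hV (hφ i), BB_comm, ← hHv, hHθ, BB_comm ρ σ m V]
      simp
    rw [hJB, hJB, hsplit, BB_add ρ σ hmc he hδ (he.add hδ), BB_comm,
      BB_add ρ σ hmc he hδ he, BB_comm ρ σ m (fun y => ∑ i, (θ - θstar) i * φ i y)
        (fun x => _ + _), BB_add ρ σ hmc he hδ hδ, horth, BB_comm ρ σ m (fun x => _ - _)
        (fun y => ∑ i, (θ - θstar) i * φ i y), horth]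
    ring
  refine ⟨hunit, fun θ => ?_, fun θ h => ?_⟩
  · rw [hexp θ]
    have := BB_self_nonneg (σ := σ) (f := fun y => ∑ i, (θ - θstar) i * φ i y) hρ hm0
    linarith
  · rw [hexp θ] at h
    exact sub_eq_zero.1 (hzero _ (by linarith))
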